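/- For every integer m ≥ 8, f(3^m, 4) ≥ ⌈(m+1)/4⌉. -/

import Mathlib

/-!
Write `M u` for the product of the symmetric matrices `[[a, 1], [1, 0]]` over the entries `a` of
`u`; its top-left entry is `⟨u⟩`, and reversing `u` transposes it. If `(p, q)` is the first row of
`M u`, then `⟨u, 2⟩ = 2p + q`, while folding `u` around a middle block `c` gives
`⟨u, c, uᴿ⟩ = (p, q) * M c * (p, q)ᵀ`. This quadratic form is `(2p + q)²` for the blocks `3, 1` and
`1, 3`, and `3 (2p + q)²` for the blocks `2, 2, 1, 1` and `1, 1, 2, 2`.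

Let `C m` be the number of words `w` over `{1, 2, 3}` with `⟨2, w, 2⟩ = 3 ^ m`. Folding `u = 2, w`
gives `C (2k) ≥ 2 C k` and `C (2k + 1) ≥ 2 C k`, so one witness for each of `m = 4, 5, 6, 7` yields
`16 C m ≥ m + 1` for all `m ≥ 4`. Each outer `2` may be replaced by `1, 1` without changing the
continuant, so `f (3 ^ m) 4 ≥ 4 C m ≥ (m + 1) / 4`. For `m < 4` a single sequence suffices.
-/

/-- The continuant of a finite sequence of positive integers. -/
def continuant : List ℕ → ℕ
  | [] => 1
  | [a] => a
  | a :: b :: t => a * continuant (b :: t) + continuant t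

/-- `f d N` is the number of finite sequences of positive integers, all entries `< N`,
whose continuant equals `d`. -/
noncomputable def f (d N : ℕ) : ℕ :=
  Set.ncard {l : List ℕ | (∀ x ∈ l, 0 < x ∧ x < N) ∧ continuant l = d}

/-- `lam` is the largest real root of the real function `p`. -/
def IsGreatestRoot (p : ℝ → ℝ) (lam : ℝ) : Prop :=
  p lam = 0 ∧ ∀ x : ℝ, p x = 0 → x ≤ lam

/-- The product of the matrices `[[a, 1], [1, 0]]` over the entries `a` of a list, which turns
concatenation of lists into multiplication and reversal into transposition. -/
def continuantMatrix (l : List ℕ) : Matrix (Fin 2) (Fin 2) ℕ :=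
  (l.map fun a => !![a, 1; 1, 0]).prod

theorem continuantMatrix_nil : continuantMatrix [] = 1 := rfl

theorem continuantMatrix_cons (a : ℕ) (l : List ℕ) :
    continuantMatrix (a :: l) = !![a, 1; 1, 0] * continuantMatrix l :=
  List.prod_cons

theorem continuantMatrix_append (l l' : List ℕ) :
    continuantMatrix (l ++ l') = continuantMatrix l * continuantMatrix l' := by
  simp [continuantMatrix]

theorem continuantMatrix_reverse (l : List ℕ) :
    continuantMatrix l.reverse = (continuantMatrix l).transpose := by
  induction l with
  | nil => simp [continuantMatrix_nil]
  | cons a l ih =>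
    have symm : (!![a, 1; 1, 0] : Matrix (Fin 2) (Fin 2) ℕ).transpose = !![a, 1; 1, 0] := by
      ext i j
      fin_cases i <;> fin_cases j <;> rfl
    rw [List.reverse_cons, continuantMatrix_append, ih, continuantMatrix_cons a l,
      Matrix.transpose_mul, symm, continuantMatrix_cons, continuantMatrix_nil, mul_one]

theorem continuant_eq_continuantMatrix (l : List ℕ) : continuant l = continuantMatrix l 0 0 := by
  induction l using continuant.induct with
  | case1 => simp [continuant, continuantMatrix_nil]
  | case2 a => simp [continuant, continuantMatrix_cons, continuantMatrix_nil]
  | case3 a b t ih₁ ih₂ =>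
    rw [continuant, ih₁, ih₂, continuantMatrix_cons a, continuantMatrix_cons b]
    simp [Matrix.mul_apply, Matrix.vecMul, dotProduct, Fin.sum_univ_two]

theorem continuant_reverse (l : List ℕ) : continuant l.reverse = continuant l := by
  simp only [continuant_eq_continuantMatrix, continuantMatrix_reverse, Matrix.transpose_apply]

theorem continuant_append_singleton (u : List ℕ) (a : ℕ) :
    continuant (u ++ [a]) = a * continuantMatrix u 0 0 + continuantMatrix u 0 1 := by
  simp [continuant_eq_continuantMatrix, continuantMatrix_append, continuantMatrix_cons,
    continuantMatrix_nil, Matrix.mul_apply, Fin.sum_univ_two, mul_comm]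

open scoped Matrix in
theorem continuant_append_append_reverse (u c : List ℕ) :
    continuant (u ++ c ++ u.reverse) =
      continuantMatrix u 0 ⬝ᵥ continuantMatrix c *ᵥ continuantMatrix u 0 := by
  rw [continuant_eq_continuantMatrix, continuantMatrix_append, continuantMatrix_append,
    continuantMatrix_reverse, Matrix.mul_mul_apply, Matrix.transpose_transpose]

open scoped Matrix in
/-- The quadratic form of the matrix of `c` is `k` times the square of `2p + q`, the form that
computes `⟨u, 2⟩` from the first row `(p, q)` of the matrix of `u`. These are the blocks around
which sequences are folded. -/
def IsSquareBlock (k : ℕ) (c : List ℕ) : Prop :=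
  ∀ v : Fin 2 → ℕ, v ⬝ᵥ continuantMatrix c *ᵥ v = k * (2 * v 0 + v 1) ^ 2

theorem IsSquareBlock.continuant_fold {k : ℕ} {c : List ℕ} (hc : IsSquareBlock k c)
    (u : List ℕ) : continuant (u ++ c ++ u.reverse) = k * continuant (u ++ [2]) ^ 2 := by
  rw [continuant_append_append_reverse, hc, continuant_append_singleton]

theorem isSquareBlock_one_of_mem {c : List ℕ} (hc : c ∈ ({[3, 1], [1, 3]} : Finset (List ℕ))) :
    IsSquareBlock 1 c := by
  intro v
  fin_cases hc <;>
    simp [continuantMatrix_cons, continuantMatrix_nil, Matrix.mulVec, dotProduct,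
      Fin.sum_univ_two] <;>
    ring

theorem isSquareBlock_three_of_mem {c : List ℕ}
    (hc : c ∈ ({[2, 2, 1, 1], [1, 1, 2, 2]} : Finset (List ℕ))) : IsSquareBlock 3 c := by
  intro v
  fin_cases hc <;>
    simp [continuantMatrix_cons, continuantMatrix_nil, Matrix.mulVec, dotProduct,
      Fin.sum_univ_two] <;>
    ring

theorem continuant_pos {l : List ℕ} (h : ∀ x ∈ l, 0 < x) : 0 < continuant l := by
  induction l using continuant.induct with
  | case1 => simp [continuant]
  | case2 a => simpa [continuant] using h
  | case3 a b t _ ih =>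
    exact Nat.add_pos_right _ (ih fun x hx => h x (by simp [hx]))

theorem length_le_continuant {l : List ℕ} (h : ∀ x ∈ l, 0 < x) : l.length ≤ continuant l := by
  induction l using continuant.induct with
  | case1 => simp
  | case2 a => exact h a (by simp)
  | case3 a b t ih _ =>
    obtain ⟨ha, hbt⟩ := List.forall_mem_cons.1 h
    calc (a :: b :: t).length = (b :: t).length + 1 := rfl
      _ ≤ a * continuant (b :: t) + continuant t :=
        add_le_add ((ih hbt).trans (Nat.le_mul_of_pos_left _ ha))
          (continuant_pos (List.forall_mem_cons.1 hbt).2)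

theorem finite_setOf_forall_lt_and_length_le (N n : ℕ) :
    {l : List ℕ | (∀ x ∈ l, x < N) ∧ l.length ≤ n}.Finite := by
  refine ((List.finite_length_le (Fin N) n).image (List.map Fin.val)).subset ?_
  rintro l ⟨hlt, hlength⟩
  exact ⟨l.pmap Fin.mk hlt, by simpa using hlength, by simp [List.map_pmap]⟩

theorem finite_setOf_continuant_eq (d N : ℕ) :
    {l : List ℕ | (∀ x ∈ l, 0 < x ∧ x < N) ∧ continuant l = d}.Finite := by
  refine (finite_setOf_forall_lt_and_length_le N d).subset ?_
  rintro l ⟨hl, rfl⟩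
  exact ⟨fun x hx => (hl x hx).2, length_le_continuant fun x hx => (hl x hx).1⟩

theorem f_pos_of_continuant_eq {d N : ℕ} {l : List ℕ} (hl : ∀ x ∈ l, 0 < x ∧ x < N)
    (hd : continuant l = d) : 0 < f d N :=
  (Set.ncard_pos (finite_setOf_continuant_eq d N)).2 ⟨l, hl, hd⟩

/-- The words `w` over `{1, …, N - 1}` with `⟨2, w, 2⟩ = d`. The outer entries `2` are left out of
`w` because they are the ones that may be exchanged for `1, 1`. -/
def coreWords (N d : ℕ) : Set (List ℕ) :=
  {w | (∀ x ∈ w, 0 < x ∧ x < N) ∧ continuant ([2] ++ w ++ [2]) = d}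

theorem finite_coreWords (N d : ℕ) : (coreWords N d).Finite := by
  refine (finite_setOf_forall_lt_and_length_le N d).subset ?_
  rintro w ⟨hw, rfl⟩
  refine ⟨fun x hx => (hw x hx).2, ?_⟩
  calc w.length ≤ ([2] ++ w ++ [2]).length := by grind
    _ ≤ continuant ([2] ++ w ++ [2]) := length_le_continuant <| by
      simpa [or_imp, forall_and] using fun x hx => (hw x hx).1

/-- The two interchangeable ends `2` and `1, 1` of a sequence. -/
def exchangeableEnds : Finset (List ℕ) := {[2], [1, 1]}

theorem continuant_append_of_mem_exchangeableEnds {e : List ℕ} (he : e ∈ exchangeableEnds)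
    (l : List ℕ) : continuant (e ++ l) = continuant ([2] ++ l) := by
  fin_cases he
  · rfl
  · cases l with
    | nil => rfl
    | cons a l =>
      simp only [List.cons_append, List.nil_append, continuant]
      ring

theorem reverse_of_mem_exchangeableEnds {e : List ℕ} (he : e ∈ exchangeableEnds) :
    e.reverse = e := by
  fin_cases he <;> rfl

theorem continuant_append_append_of_mem_exchangeableEnds {e e' : List ℕ}
    (he : e ∈ exchangeableEnds) (he' : e' ∈ exchangeableEnds) (w : List ℕ) :
    continuant (e ++ w ++ e') = continuant ([2] ++ w ++ [2]) :=
  calc continuant (e ++ w ++ e')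
    _ = continuant ([2] ++ (w ++ e')) := by
      rw [List.append_assoc, continuant_append_of_mem_exchangeableEnds he]
    _ = continuant (e' ++ ([2] ++ w).reverse) := by
      rw [← continuant_reverse, ← List.append_assoc, List.reverse_append,
        reverse_of_mem_exchangeableEnds he']
    _ = continuant ([2] ++ w ++ [2]) := by
      rw [continuant_append_of_mem_exchangeableEnds he', ← continuant_reverse]
      simp only [List.reverse_append, List.reverse_reverse, List.reverse_singleton]

theorem append_inj_of_mem_exchangeableEnds {e e' l l' : List ℕ} (he : e ∈ exchangeableEnds)
    (he' : e' ∈ exchangeableEnds) (h : e ++ l = e' ++ l') : e = e' ∧ l = l' := by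
  fin_cases he <;> fin_cases he' <;> simp_all

-- The ends form a prefix code, and being palindromes also a suffix code.
theorem injOn_append_exchangeableEnds :
    Set.InjOn (fun p : (List ℕ × List ℕ) × List ℕ => p.1.1 ++ p.2 ++ p.1.2)
      (((exchangeableEnds ×ˢ exchangeableEnds : Finset _) : Set (List ℕ × List ℕ)) ×ˢ
        Set.univ) := by
  rintro ⟨⟨e₁, e₂⟩, w⟩ he ⟨⟨e₁', e₂'⟩, w'⟩ he' h
  simp only [Set.mem_prod, Finset.mem_coe, Finset.mem_product, Set.mem_univ, and_true] at he he'
  simp only [List.append_assoc] at h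
  obtain ⟨rfl, htail⟩ := append_inj_of_mem_exchangeableEnds he.1 he'.1 h
  have hreverse : e₂ ++ w.reverse = e₂' ++ w'.reverse := by
    simpa only [List.reverse_append, reverse_of_mem_exchangeableEnds he.2,
      reverse_of_mem_exchangeableEnds he'.2] using congrArg List.reverse htail
  obtain ⟨rfl, hw⟩ := append_inj_of_mem_exchangeableEnds he.2 he'.2 hreverse
  rw [List.reverse_injective hw]

theorem four_mul_ncard_coreWords_le_f {N : ℕ} (hN : 3 ≤ N) (d : ℕ) :
    4 * (coreWords N d).ncard ≤ f d N := by
  have ends_lt : ∀ e ∈ exchangeableEnds, ∀ x ∈ e, 0 < x ∧ x < N := by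
    grind [exchangeableEnds]
  have card_ends : (exchangeableEnds ×ˢ exchangeableEnds).card = 4 := rfl
  calc 4 * (coreWords N d).ncard
    _ = (((exchangeableEnds ×ˢ exchangeableEnds : Finset _) : Set (List ℕ × List ℕ)) ×ˢ
          coreWords N d).ncard := by
      rw [Set.ncard_prod, Set.ncard_coe_finset, card_ends]
    _ ≤ f d N := by
      refine Set.ncard_le_ncard_of_injOn _ ?_
        (injOn_append_exchangeableEnds.mono (Set.prod_mono_right (Set.subset_univ _)))
        (finite_setOf_continuant_eq d N)
      rintro ⟨⟨e, e'⟩, w⟩ ⟨he, hw, hd⟩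
      obtain ⟨he, he'⟩ := Finset.mem_product.1 he
      refine ⟨?_, (continuant_append_append_of_mem_exchangeableEnds he he' w).trans hd⟩
      simp only [List.forall_mem_append]
      exact ⟨⟨ends_lt e he, hw⟩, ends_lt e' he'⟩

theorem fold_mem_coreWords {N d k : ℕ} {w c : List ℕ} (hw : w ∈ coreWords N d)
    (hc : IsSquareBlock k c) (hcN : ∀ x ∈ c, 0 < x ∧ x < N) :
    w ++ c ++ w.reverse ∈ coreWords N (k * d ^ 2) := by
  obtain ⟨hwN, hd⟩ := hw
  constructor
  · simp only [List.forall_mem_append, List.mem_reverse]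
    exact ⟨⟨hwN, hcN⟩, hwN⟩
  · have hfold := hc.continuant_fold ([2] ++ w)
    rw [hd] at hfold
    simpa only [List.reverse_append, List.reverse_singleton, List.append_assoc] using hfold

-- The length of the fold determines the length of `w`, hence the prefix `w` itself.
theorem injOn_fold {α : Type*} {B : Set (List α)} {n : ℕ} (hB : ∀ c ∈ B, c.length = n) :
    Set.InjOn (fun p : List α × List α => p.2 ++ p.1 ++ p.2.reverse) (B ×ˢ Set.univ) := by
  rintro ⟨c, w⟩ ⟨hc, -⟩ ⟨c', w'⟩ ⟨hc', -⟩ h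
  have hblock : c.length = c'.length := (hB c hc).trans (hB c' hc').symm
  have hlength := congrArg List.length h
  simp only [List.length_append, List.length_reverse] at hlength
  simp only [List.append_assoc] at h
  obtain ⟨rfl, htail⟩ := List.append_inj h (by omega)
  rw [(List.append_inj htail hblock).1]

theorem card_mul_ncard_coreWords_le {N k n : ℕ} {B : Finset (List ℕ)}
    (hB : ∀ c ∈ B, IsSquareBlock k c) (hBN : ∀ c ∈ B, ∀ x ∈ c, 0 < x ∧ x < N)
    (hlength : ∀ c ∈ B, c.length = n) (d : ℕ) :
    B.card * (coreWords N d).ncard ≤ (coreWords N (k * d ^ 2)).ncard := by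
  rw [← Set.ncard_coe_finset, ← Set.ncard_prod]
  refine Set.ncard_le_ncard_of_injOn _ ?_
    ((injOn_fold hlength).mono (Set.prod_mono_right (Set.subset_univ _))) (finite_coreWords N _)
  rintro ⟨c, w⟩ ⟨hc, hw⟩
  exact fold_mem_coreWords hw (hB c hc) (hBN c hc)

theorem two_mul_ncard_coreWords_le_sq {N : ℕ} (hN : 4 ≤ N) (d : ℕ) :
    2 * (coreWords N d).ncard ≤ (coreWords N (d ^ 2)).ncard := by
  simpa using card_mul_ncard_coreWords_le (N := N) (n := 2)
    (fun _ => isSquareBlock_one_of_mem) (by grind) (by simp) d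

theorem two_mul_ncard_coreWords_le_three_mul_sq {N : ℕ} (hN : 3 ≤ N) (d : ℕ) :
    2 * (coreWords N d).ncard ≤ (coreWords N (3 * d ^ 2)).ncard := by
  simpa using card_mul_ncard_coreWords_le (N := N) (n := 4)
    (fun _ => isSquareBlock_three_of_mem) (by grind) (by simp) d

theorem coreWords_three_pow_nonempty {N m : ℕ} (hN : 4 ≤ N) (hm : 4 ≤ m) (hm' : m < 8) :
    (coreWords N (3 ^ m)).Nonempty := by
  interval_cases m
  · exact ⟨[1, 1, 1, 1, 2], by grind, by simp [continuant]⟩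
  · exact ⟨[1, 1, 2, 2, 3], by grind, by simp [continuant]⟩
  · exact ⟨[1, 1, 2, 1, 3, 1, 3], by grind, by simp [continuant]⟩
  · exact ⟨[1, 2, 2, 1, 2, 3, 2, 1], by grind (gen := 9), by simp [continuant]⟩

theorem add_one_le_mul_ncard_coreWords_three_pow {N m : ℕ} (hN : 4 ≤ N) (hm : 4 ≤ m) :
    m + 1 ≤ 16 * (coreWords N (3 ^ m)).ncard := by
  induction m using Nat.strong_induction_on with
  | _ m ih =>
    rcases lt_or_ge m 8 with hm' | hm'
    · have hpos : 0 < (coreWords N (3 ^ m)).ncard :=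
        (Set.ncard_pos (finite_coreWords N _)).2 (coreWords_three_pow_nonempty hN hm hm')
      omega
    obtain ⟨k, rfl | rfl⟩ := m.even_or_odd'
    · have hfold := two_mul_ncard_coreWords_le_sq hN (3 ^ k)
      rw [← pow_mul'] at hfold
      have hk := ih k (by omega) (by omega)
      omega
    · have hfold := two_mul_ncard_coreWords_le_three_mul_sq (N := N) (by omega) (3 ^ k)
      rw [← pow_mul', ← pow_succ'] at hfold
      have hk := ih k (by omega) (by omega)
      omega

theorem f_three_pow_pos {N m : ℕ} (hN : 4 ≤ N) (hm : m < 4) : 0 < f (3 ^ m) N := by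
  interval_cases m
  · exact f_pos_of_continuant_eq (l := [1]) (by grind) (by simp [continuant])
  · exact f_pos_of_continuant_eq (l := [3]) (by grind) (by simp [continuant])
  · exact f_pos_of_continuant_eq (l := [2, 3, 1]) (by grind) (by simp [continuant])
  · exact f_pos_of_continuant_eq (l := [3, 2, 1, 2]) (by grind) (by simp [continuant])

theorem add_one_le_four_mul_f_three_pow {N : ℕ} (hN : 4 ≤ N) (m : ℕ) : m + 1 ≤ 4 * f (3 ^ m) N := by
  rcases lt_or_ge m 4 with hm | hm
  · have hpos := f_three_pow_pos hN hm
    omega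
  · have hcore := add_one_le_mul_ncard_coreWords_three_pow hN hm
    have hf := four_mul_ncard_coreWords_le_f (N := N) (by omega) (3 ^ m)
    omega

theorem theorem4_general {N : ℕ} (hN : 4 ≤ N) (m : ℕ) :
    (⌈((m : ℝ) + 1) / 4⌉ : ℤ) ≤ (f (3 ^ m) N : ℤ) := by
  rw [Int.ceil_le, div_le_iff₀' (by norm_num)]
  exact_mod_cast add_one_le_four_mul_f_three_pow hN m

theorem theorem4 (m : ℕ) (hm : 8 ≤ m) :
    (⌈((m : ℝ) + 1) / 4⌉ : ℤ) ≤ (f (3 ^ m) 4 : ℤ) :=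
  theorem4_general le_rfl m
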